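/- For integers m ≥ 1, n ≥ 1 and any parameter μ ∈ ℝ, the generalised Laguerre polynomials satisfy the Hirota bilinear equations D_z(T_{m,n−1}^{(μ+1)} • T_{m,n}^{(μ)}) = T_{m+1,n−1}^{(μ)} T_{m−1,n}^{(μ+1)}, D_z(T_{m,n−1}^{(μ+1)} • T_{m+1,n}^{(μ−1)}) = T_{m+1,n−1}^{(μ)} T_{m,n}^{(μ)}, D_z(T_{m,n−1}^{(μ+1)} • T_{m,n}^{(μ−1)}) = T_{m+1,n−1}^{(μ)} T_{m−1,n}^{(μ)}, D_z(T_{m+1,n}^{(μ)} • T_{m,n}^{(μ+1)}) = T_{m+1,n−1}^{(μ+1)} T_{m,n+1}^{(μ)}, D_z(T_{m,n}^{(μ)} • T_{m,n}^{(μ+1)}) = T_{m+1,n−1}^{(μ+1)} T_{m−1,n+1}^{(μ)}, D_z(T_{m+1,n}^{(μ)} • T_{m,n}^{(μ)}) = T_{m+1,n−1}^{(μ+1)} T_{m,n+1}^{(μ−1)}, together with the discrete bilinear equation T_{m,n}^{(μ)} T_{m,n−1}^{(μ)} − T_{m−1,n}^{(μ)} T_{m+1,n−1}^{(μ)} = T_{m,n}^{(μ−1)}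 T_{m,n−1}^{(μ+1)}. -/

import Mathlib

noncomputable section

open Finset

/-- Generalized binomial coefficient `C(x, k)` for real `x`. -/
def genBinom (x : ℝ) (k : ℕ) : ℝ :=
  (∏ i ∈ Finset.range k, (x - i)) / (Nat.factorial k)

/-- Associated Laguerre polynomial `L_n^{(α)}(z)`, with the convention `L_n^{(α)} = 0` for `n < 0`. -/
def lagL (n : ℤ) (α : ℝ) : ℝ → ℝ := fun z =>
  if n < 0 then 0
  else ∑ k ∈ Finset.range (n.toNat + 1),
    (-1 : ℝ) ^ k * genBinom ((n : ℝ) + α) (n.toNat - k) * z ^ k / (Nat.factorial k)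

/-- Generalised Laguerre polynomial
`T_{m,n}^{(μ)}(z) = det[(d/dz)^{j+k} L_{m+n}^{(μ+1)}(z)]_{j,k=0}^{n-1}`
(with `T_{m,0}^{(μ)} = 1`, the empty determinant). -/
def genLag (m : ℤ) (n : ℕ) (μ : ℝ) : ℝ → ℝ := fun z =>
  Matrix.det (Matrix.of fun j k : Fin n =>
    iteratedDeriv ((j : ℕ) + (k : ℕ)) (lagL (m + n) (μ + 1)) z)

/-- Wronskian `Wr(f_1, …, f_r)(z) = det[(d/dz)^{j-1} f_k(z)]`. -/
def wronskian {r : ℕ} (f : Fin r → ℝ → ℝ) : ℝ → ℝ := fun z =>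
  Matrix.det (Matrix.of fun j k : Fin r => iteratedDeriv (j : ℕ) (f k) z)

/-- The constant `c_{m,n} = (-1)^{n(2m+1+n)/2} ∏_{j=1}^n (j-1)!/(m+j)!`. -/
def cmn (m n : ℕ) : ℝ :=
  (-1 : ℝ) ^ (n * (2 * m + 1 + n) / 2) *
    ∏ j ∈ Finset.range n, (Nat.factorial j : ℝ) / (Nat.factorial (m + j + 1))

/-- `τ_{m,n}^{(μ)}(z) = det[(z d/dz)^{j+k} L_{m+n}^{(n+μ)}(z)]_{j,k=0}^{n-1}`. -/
def tauP (m : ℤ) (n : ℕ) (μ : ℝ) : ℝ → ℝ := fun z =>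
  Matrix.det (Matrix.of fun j k : Fin n =>
    ((fun (g : ℝ → ℝ) => fun t => t * deriv g t)^[(j : ℕ) + (k : ℕ)]
      (lagL (m + n) ((n : ℝ) + μ))) z)

/-- Hirota bilinear operator `D_z(f • g) = f' g - f g'`. -/
def hirota (f g : ℝ → ℝ) (z : ℝ) : ℝ := deriv f z * g z - f z * deriv g z

/-- Probabilists' Hermite polynomial `He_n` as a real function. -/
def He (n : ℕ) : ℝ → ℝ := fun z => Polynomial.aeval z (Polynomial.hermite n)

/-- The fifth Painlevé equation (with `δ = -1/2`) for `w` with parameters `(a, b, c)`,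
holding at the point `z`. -/
def PV (a b c : ℝ) (w : ℝ → ℝ) (z : ℝ) : Prop :=
  iteratedDeriv 2 w z =
    (1 / (2 * w z) + 1 / (w z - 1)) * (deriv w z) ^ 2
      - (1 / z) * deriv w z
      + (w z - 1) ^ 2 * (a * (w z) ^ 2 + b) / (z ^ 2 * w z)
      + c * w z / z
      - w z * (w z + 1) / (2 * (w z - 1))

/-- The Jimbo–Miwa–Okamoto `σ`-equation `S_V` with parameters `(ν₁, ν₂, ν₃)`,
holding at the point `z`. -/
def SV (ν₁ ν₂ ν₃ : ℝ) (σ : ℝ → ℝ) (z : ℝ) : Prop :=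
  (z * iteratedDeriv 2 σ z) ^ 2 =
    (2 * (deriv σ z) ^ 2 + (ν₁ + ν₂ + ν₃ - z) * deriv σ z + σ z) ^ 2
      - 4 * deriv σ z * (deriv σ z + ν₁) * (deriv σ z + ν₂) * (deriv σ z + ν₃)

/-!
All Laguerre functions in one equation are of the form `(a d/dz + b) f` for a single Laguerre
function `f`: we have `L_{N-1}^{(α+1)} = -(d/dz) L_N^{(α)}` and
`L_N^{(α+1)} = (1 - d/dz) L_N^{(α)}`. On Hankel rows, `a d/dz + b` acts as `a E + b`, with `E` the
shift of the columns, and the kernel of `a E + b` is spanned by a geometric sequence. Bordering the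
Hankel rows of `f` with this sequence therefore gives the Hankel determinant of `(a d/dz + b) f`, so
that all determinants in one equation have most of their rows in common. The derivative of a Hankel
determinant only shifts its last row. Each equation is then a Plücker relation.
-/

section HankelRows
variable {R : Type*}

/-- Row `i`, truncated to length `n`, of the infinite Hankel matrix of the sequence `c`. -/
def hankelRow (c : ℕ → R) (n i : ℕ) : Fin n → R := fun j ↦ c (i + j)

/-- The first `m` rows, truncated to length `n`, of the infinite Hankel matrix of the sequence
`c`. -/
def hankelRows (c : ℕ → R) (m n : ℕ) : Fin m → Fin n → R := fun i ↦ hankelRow c n i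

theorem hankelRow_comp_succ (c : ℕ → R) (n i : ℕ) :
    hankelRow (fun i ↦ c (i + 1)) n i = hankelRow c n (i + 1) := by
  ext j
  simp only [hankelRow, add_right_comm]

theorem hankelRows_succ_eq_snoc (c : ℕ → R) (m n : ℕ) :
    hankelRows c (m + 1) n = Fin.snoc (hankelRows c m n) (hankelRow c n m) :=
  (Fin.snoc_init_self (hankelRows c (m + 1) n)).symm

theorem hankelRows_succ_eq_cons (c : ℕ → R) (m n : ℕ) :
    hankelRows c (m + 1) n =
      Fin.cons (hankelRow c n 0) (hankelRows (fun i ↦ c (i + 1)) m n) := by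
  rw [← Fin.cons_self_tail (hankelRows c (m + 1) n)]
  congr 1
  ext i : 1
  exact (hankelRow_comp_succ c n i).symm

end HankelRows

section Determinants
open Matrix Function
variable {R : Type*} [CommRing R]

section Plucker
variable {ι : Type*} [Fintype ι] [DecidableEq ι]

theorem detRowAlternating_smul_eq_sum (A : ι → ι → R) (x : ι → R) :
    detRowAlternating A • x = ∑ i, detRowAlternating (update A i x) • A i := by
  have cramer_rule := mulVec_cramer (of A)ᵀ x
  simp only [det_transpose, mulVec_eq_sum, cramer_transpose_apply, op_smul_eq_smul,
    transpose_transpose] at cramer_rule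
  exact cramer_rule.symm

theorem detRowAlternating_plucker (A : ι → ι → R) {p q : ι} (hpq : p ≠ q) (x y : ι → R) :
    detRowAlternating A * detRowAlternating (update (update A p x) q y) =
      detRowAlternating (update A p x) * detRowAlternating (update A q y) -
        detRowAlternating (update A q x) * detRowAlternating (update A p y) := by
  have expand := congrArg (fun v ↦ detRowAlternating (update (update A q y) p v))
    (detRowAlternating_smul_eq_sum A x)
  simp only [AlternatingMap.map_update_smul, AlternatingMap.map_update_sum, smul_eq_mul] at expand
  have row_p : update (update A q y) p (A p) = update A q y := by
    rw [update_comm hpq.symm, update_eq_self]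
  have row_q : detRowAlternating (update (update A q y) p (A q)) =
      -detRowAlternating (update A p y) := by
    rw [← detRowAlternating.map_swap (update A p y) hpq]
    congr 1
    ext i : 1
    rcases eq_or_ne i p with rfl | hip
    · simp [hpq.symm]
    rcases eq_or_ne i q with rfl | hiq
    · simp [hip]
    · simp [hip, hiq, Equiv.swap_apply_of_ne_of_ne hip hiq]
  have row_other (i : ι) (hi : i ≠ p ∧ i ≠ q) :
      detRowAlternating (update (update A q y) p (A i)) = 0 :=
    detRowAlternating.map_eq_zero_of_eq _ (by simp [hi.1, hi.2]) hi.1.symm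
  rw [Finset.sum_eq_add p q hpq (fun i _ hi ↦ by rw [row_other i hi, mul_zero])
    (by simp) (by simp), row_p, row_q, update_comm hpq.symm] at expand
  rw [expand]; ring

end Plucker

variable {n : ℕ}

/-- Determinant of the square matrix with rows `v`. -/
abbrev rowDet (v : Fin n → Fin n → R) : R := detRowAlternating v

theorem rowDet_snoc (v : Fin n → Fin (n + 1) → R) (b : Fin (n + 1) → R) :
    rowDet (Fin.snoc v b) = (-1) ^ n * rowDet (Fin.cons b v) := by
  have rotate := detRowAlternating.map_perm (Fin.cons b v : Fin (n + 1) → Fin (n + 1) → R)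
    (finRotate (n + 1))
  rw [sign_finRotate] at rotate
  rw [Fin.snoc_eq_cons_rotate]
  simpa [Units.smul_def, comp_def] using rotate

theorem rowDet_cons_snoc_plucker (a b x y : Fin (n + 2) → R) (w : Fin n → Fin (n + 2) → R) :
    rowDet (Fin.cons a (Fin.snoc w b)) * rowDet (Fin.cons x (Fin.snoc w y)) =
      rowDet (Fin.cons x (Fin.snoc w b)) * rowDet (Fin.cons a (Fin.snoc w y)) -
        rowDet (Fin.cons x (Fin.cons a w)) * rowDet (Fin.snoc (Fin.snoc w b) y) := by
  have update_last (c d e : Fin (n + 2) → R) :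
      update (Fin.cons c (Fin.snoc w d) : Fin (n + 2) → Fin (n + 2) → R) (Fin.last _) e =
        Fin.cons c (Fin.snoc w e) := by
    rw [Fin.cons_snoc_eq_snoc_cons, Fin.update_snoc_last, Fin.cons_snoc_eq_snoc_cons]
  have plucker := detRowAlternating_plucker
    (Fin.cons a (Fin.snoc w b) : Fin (n + 2) → Fin (n + 2) → R) (p := 0) (q := Fin.last (n + 1))
    (Fin.last_pos' (n := n + 1)).ne x y
  simp only [Fin.update_cons_zero, update_last] at plucker
  have rotate_x : rowDet (Fin.cons a (Fin.snoc w x)) =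
      (-1) ^ (n + 1) * rowDet (Fin.cons x (Fin.cons a w)) := by
    rw [Fin.cons_snoc_eq_snoc_cons, rowDet_snoc]
  rw [rowDet_snoc (Fin.snoc w b) y]
  linear_combination plucker - rowDet (Fin.cons y (Fin.snoc w b)) * rotate_x

/-- The operator `a E + b` on finite sequences, where `E` is the shift. -/
def shiftComb (a b : R) (v : Fin (n + 1) → R) : Fin n → R :=
  fun i ↦ a * v i.succ + b * v i.castSucc

/-- The homogeneous geometric sequence spanning the kernel of `shiftComb a b`. -/
def shiftCombKer (a b : R) : Fin (n + 1) → R := fun i ↦ a ^ (i.rev : ℕ) * (-b) ^ (i : ℕ)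

theorem shiftComb_shiftCombKer (a b a' b' : R) :
    shiftComb a' b' (shiftCombKer a b : Fin (n + 2) → R) =
      (a * b' - a' * b) • shiftCombKer a b := by
  ext i
  have rev_castSucc : (i.castSucc.rev : ℕ) = i.rev + 1 := by
    rw [Fin.rev_castSucc, Fin.val_succ]
  simp only [shiftComb, shiftCombKer, Fin.rev_succ, Fin.val_castSucc, Fin.val_succ, rev_castSucc,
    Pi.smul_apply, smul_eq_mul]
  ring

theorem shiftComb_shiftCombKer_self (a b : R) :
    shiftComb a b (shiftCombKer a b : Fin (n + 1) → R) = 0 := by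
  cases n with
  | zero => exact Subsingleton.elim _ _
  | succ n => rw [shiftComb_shiftCombKer, mul_comm a b, sub_self, zero_smul]

theorem prod_pow_mul_rowDet (a b : R) (v : Fin (n + 1) → Fin (n + 1) → R) :
    (∏ j : Fin (n + 1), a ^ (j : ℕ)) * rowDet v =
      rowDet fun i ↦ Fin.cons (v i 0) fun j ↦ a ^ (j : ℕ) * shiftComb a b (v i) j := by
  refine (det_mul_row (fun j : Fin (n + 1) ↦ a ^ (j : ℕ)) (of v)).symm.trans <|
    det_eq_of_forall_col_eq_smul_add_pred (fun _ ↦ -b) (by simp) fun i j ↦ ?_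
  simp only [of_apply, Fin.cons_succ, shiftComb, Fin.val_succ, Fin.val_castSucc]
  ring

theorem rowDet_cons_shiftCombKer_of_regular {a : R} (ha : IsLeftRegular a) (b : R)
    (v : Fin n → Fin (n + 1) → R) :
    rowDet (Fin.cons (shiftCombKer a b) v) = rowDet fun i ↦ shiftComb a b (v i) := by
  have scaled := prod_pow_mul_rowDet a b (Fin.cons (shiftCombKer a b) v)
  set K : Fin (n + 1) → Fin (n + 1) → R := fun i ↦
    Fin.cons _ fun j ↦ a ^ (j : ℕ) * shiftComb a b _ j with hK
  have first_row (j : Fin n) : K 0 j.succ = 0 := by simp [hK, shiftComb_shiftCombKer_self]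
  have expand_K : rowDet K =
      a ^ n * ((∏ j : Fin n, a ^ (j : ℕ)) * rowDet fun i ↦ shiftComb a b (v i)) := by
    have minor : ((of K).submatrix Fin.succ Fin.succ).det =
        (∏ j : Fin n, a ^ (j : ℕ)) * rowDet fun i ↦ shiftComb a b (v i) :=
      det_mul_row (fun j : Fin n ↦ a ^ (j : ℕ)) (of fun i ↦ shiftComb a b (v i))
    refine (det_succ_row_zero (of K)).trans ?_
    rw [Fin.sum_univ_succ, Finset.sum_eq_zero fun j _ ↦ by rw [of_apply, first_row]; ring,
      Fin.succAbove_zero, minor]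
    simp [hK, shiftCombKer]
  have scale_regular : IsLeftRegular ((∏ j : Fin n, a ^ (j : ℕ)) * a ^ n) := by
    rw [Finset.prod_pow_eq_pow_sum, ← pow_add]
    exact ha.pow _
  apply scale_regular
  rw [Fin.prod_univ_castSucc, expand_K] at scaled
  simp only [Fin.val_castSucc, Fin.val_last] at scaled
  linear_combination scaled

theorem rowDet_cons_shiftCombKer (a b : R) (v : Fin n → Fin (n + 1) → R) :
    rowDet (Fin.cons (shiftCombKer a b) v) = rowDet fun i ↦ shiftComb a b (v i) := by
  have generic := congrArg (Polynomial.evalRingHom a) <|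
    rowDet_cons_shiftCombKer_of_regular (Polynomial.monic_X (R := R)).isRegular.left
      (Polynomial.C b) fun i j ↦ Polynomial.C (v i j)
  have eval_rowDet {m : ℕ} (u : Fin m → Fin m → Polynomial R) :
      Polynomial.evalRingHom a (rowDet u) = rowDet fun i j ↦ (u i j).eval a :=
    RingHom.map_det _ (of u)
  simp only [eval_rowDet] at generic
  convert generic using 2
  · ext i j
    refine Fin.cases ?_ (fun i ↦ ?_) i <;> simp [shiftCombKer]
  · ext i j
    simp only [shiftComb, Polynomial.eval_add, Polynomial.eval_mul, Polynomial.eval_X,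
      Polynomial.eval_C]

theorem rowDet_cons_cons_shiftCombKer (a b a' b' : R) (v : Fin n → Fin (n + 2) → R) :
    rowDet (Fin.cons (shiftCombKer a b) (Fin.cons (shiftCombKer a' b') v)) =
      (a' * b - a * b') * rowDet fun i ↦ shiftComb a' b' (shiftComb a b (v i)) := by
  have map_cons : (fun i ↦ shiftComb a b
      ((Fin.cons (shiftCombKer a' b') v : Fin (n + 1) → Fin (n + 2) → R) i)) =
      Fin.cons ((a' * b - a * b') • shiftCombKer a' b') fun i ↦ shiftComb a b (v i) := by
    ext i : 1
    refine Fin.cases ?_ (fun i ↦ ?_) i <;> simp [shiftComb_shiftCombKer]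
  rw [rowDet_cons_shiftCombKer, map_cons, ← rowDet_cons_shiftCombKer a' b']
  have pull := detRowAlternating.map_update_smul
    (Fin.cons (shiftCombKer a' b') fun i ↦ shiftComb a b (v i) : Fin (n + 1) → Fin (n + 1) → R) 0
    (a' * b - a * b') (shiftCombKer a' b')
  simpa only [Fin.update_cons_zero, smul_eq_mul] using pull

theorem rowDet_cons_cons_plucker (a b x y : Fin (n + 2) → R) (w : Fin n → Fin (n + 2) → R) :
    rowDet (Fin.cons a (Fin.snoc w b)) * rowDet (Fin.cons y (Fin.cons x w)) =
      rowDet (Fin.cons x (Fin.snoc w b)) * rowDet (Fin.cons y (Fin.cons a w)) -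
        rowDet (Fin.cons y (Fin.snoc w b)) * rowDet (Fin.cons x (Fin.cons a w)) := by
  have plucker := rowDet_cons_snoc_plucker a b x y w
  rw [Fin.cons_snoc_eq_snoc_cons x w y, Fin.cons_snoc_eq_snoc_cons a w y, rowDet_snoc _ y,
    rowDet_snoc _ y, rowDet_snoc _ y] at plucker
  have sign_sq : (-1 : R) ^ (n + 1) * (-1) ^ (n + 1) = 1 := by
    rw [← mul_pow, neg_one_mul, neg_neg, one_pow]
  linear_combination (-1) ^ (n + 1) * plucker + (-
    rowDet (Fin.cons a (Fin.snoc w b)) * rowDet (Fin.cons y (Fin.cons x w)) +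
      rowDet (Fin.cons x (Fin.snoc w b)) * rowDet (Fin.cons y (Fin.cons a w)) -
        rowDet (Fin.cons y (Fin.snoc w b)) * rowDet (Fin.cons x (Fin.cons a w))) * sign_sq

/-- The operator `a E + b` on infinite sequences, where `E` is the shift. -/
def seqShiftComb (a b : R) (c : ℕ → R) : ℕ → R := fun i ↦ a * c (i + 1) + b * c i

/-- The Hankel determinant of order `n` of the sequence `c`. -/
def hankelDet (c : ℕ → R) (n : ℕ) : R := rowDet (hankelRows c n n)

/-- The derivative of `hankelDet c n` along the derivation `c i ↦ c (i + 1)`. -/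
def hankelDetDeriv (c : ℕ → R) (n : ℕ) : R :=
  ∑ i : Fin n, rowDet (update (hankelRows c n n) i (hankelRow c n (i + 1)))

theorem shiftComb_hankelRow (a b : R) (c : ℕ → R) (n i : ℕ) :
    shiftComb a b (hankelRow c (n + 1) i) = hankelRow (seqShiftComb a b c) n i := by
  ext j
  simp [shiftComb, hankelRow, seqShiftComb, add_assoc]

theorem hankelDet_neg (c : ℕ → R) (n : ℕ) : hankelDet (-c) n = (-1) ^ n * hankelDet c n := by
  have neg_rows := det_neg (of (hankelRows c n n))
  rwa [Fintype.card_fin] at neg_rows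

-- Shifting any other row than the last one makes it equal to the row below it.
theorem hankelDetDeriv_succ (c : ℕ → R) (n : ℕ) :
    hankelDetDeriv c (n + 1) =
      rowDet (Fin.snoc (hankelRows c n (n + 1)) (hankelRow c (n + 1) (n + 1))) := by
  have repeated_row (i : Fin n) : rowDet (update (hankelRows c (n + 1) (n + 1))
      i.castSucc (hankelRow c (n + 1) (i.castSucc + 1))) = 0 := by
    refine detRowAlternating.map_eq_zero_of_eq _ (i := i.castSucc) (j := i.succ) ?_
      i.castSucc_lt_succ.ne
    simp [i.castSucc_lt_succ.ne', hankelRows]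
  rw [hankelDetDeriv, Fin.sum_univ_castSucc, Finset.sum_eq_zero fun i _ ↦ repeated_row i, zero_add,
    hankelRows_succ_eq_snoc, Fin.update_snoc_last, Fin.val_last]

theorem rowDet_cons_shiftCombKer_hankelRows (a b : R) (c : ℕ → R) (n : ℕ) :
    rowDet (Fin.cons (shiftCombKer a b) (hankelRows c n (n + 1))) =
      hankelDet (seqShiftComb a b c) n := by
  simp only [rowDet_cons_shiftCombKer, hankelRows, shiftComb_hankelRow]
  rfl

theorem rowDet_cons_shiftCombKer_snoc_hankelRows (a b : R) (c : ℕ → R) (n : ℕ) :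
    rowDet (Fin.cons (shiftCombKer a b)
        (Fin.snoc (hankelRows c n (n + 2)) (hankelRow c (n + 2) (n + 1)))) =
      hankelDetDeriv (seqShiftComb a b c) (n + 1) := by
  rw [rowDet_cons_shiftCombKer, hankelDetDeriv_succ]
  congr 1
  ext i : 1
  refine Fin.lastCases ?_ (fun i ↦ ?_) i <;> simp [hankelRows, shiftComb_hankelRow]

theorem rowDet_cons_cons_shiftCombKer_hankelRows (a b a' b' : R) (c : ℕ → R) (n : ℕ) :
    rowDet (Fin.cons (shiftCombKer a b) (Fin.cons (shiftCombKer a' b') (hankelRows c n (n + 2)))) =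
      (a' * b - a * b') * hankelDet (seqShiftComb a' b' (seqShiftComb a b c)) n := by
  simp only [rowDet_cons_cons_shiftCombKer, hankelRows, shiftComb_hankelRow]
  rfl

theorem hankelDet_hirota_seqShiftComb (a b a' b' : R) (c : ℕ → R) (n : ℕ) :
    hankelDetDeriv (seqShiftComb a b c) (n + 1) * hankelDet (seqShiftComb a' b' c) (n + 1) -
        hankelDet (seqShiftComb a b c) (n + 1) * hankelDetDeriv (seqShiftComb a' b' c) (n + 1) =
      (a * b' - a' * b) * hankelDet (seqShiftComb a b (seqShiftComb a' b' c)) n *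
        hankelDet c (n + 2) := by
  have plucker := rowDet_cons_snoc_plucker (shiftCombKer a b) (hankelRow c (n + 2) n)
    (shiftCombKer a' b') (hankelRow c (n + 2) (n + 1)) (hankelRows c n (n + 2))
  simp only [rowDet_cons_shiftCombKer_snoc_hankelRows, rowDet_cons_cons_shiftCombKer_hankelRows,
    ← hankelRows_succ_eq_snoc, rowDet_cons_shiftCombKer_hankelRows] at plucker
  rw [← hankelDet] at plucker
  linear_combination -plucker

theorem hankelDet_seqShiftComb_three_term (a₁ b₁ a₂ b₂ a₃ b₃ : R) (c : ℕ → R) (n : ℕ) :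
    (a₂ * b₃ - a₃ * b₂) * hankelDet (seqShiftComb a₁ b₁ c) (n + 1) *
          hankelDet (seqShiftComb a₂ b₂ (seqShiftComb a₃ b₃ c)) n =
      (a₁ * b₃ - a₃ * b₁) * hankelDet (seqShiftComb a₂ b₂ c) (n + 1) *
          hankelDet (seqShiftComb a₁ b₁ (seqShiftComb a₃ b₃ c)) n -
        (a₁ * b₂ - a₂ * b₁) * hankelDet (seqShiftComb a₃ b₃ c) (n + 1) *
          hankelDet (seqShiftComb a₁ b₁ (seqShiftComb a₂ b₂ c)) n := by
  have plucker := rowDet_cons_cons_plucker (shiftCombKer a₁ b₁) (hankelRow c (n + 2) n)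
    (shiftCombKer a₂ b₂) (shiftCombKer a₃ b₃) (hankelRows c n (n + 2))
  simp only [rowDet_cons_cons_shiftCombKer_hankelRows, ← hankelRows_succ_eq_snoc,
    rowDet_cons_shiftCombKer_hankelRows] at plucker
  linear_combination plucker

theorem hankelDet_hirota_seqShiftComb_shift (a b : R) (c : ℕ → R) (n : ℕ) :
    hankelDetDeriv (seqShiftComb a b fun i ↦ c (i + 1)) n * hankelDet c (n + 1) -
        hankelDet (seqShiftComb a b fun i ↦ c (i + 1)) n * hankelDetDeriv c (n + 1) =
      -(hankelDet (seqShiftComb a b c) n * hankelDet (fun i ↦ c (i + 1)) (n + 1)) := by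
  cases n with
  | zero =>
    have deriv_one : hankelDetDeriv c 1 = hankelDet (fun i ↦ c (i + 1)) 1 := by
      rw [hankelDetDeriv_succ, hankelDet, hankelRows_succ_eq_snoc, hankelRow_comp_succ]
      congr 2
      exact Subsingleton.elim _ _
    have deriv_zero (d : ℕ → R) : hankelDetDeriv d 0 = 0 := Fin.sum_univ_zero _
    have det_zero (d : ℕ → R) : hankelDet d 0 = 1 := det_isEmpty
    simp only [deriv_one, deriv_zero, det_zero]
    ring
  | succ n =>
    set c' : ℕ → R := fun i ↦ c (i + 1) with hc'
    have plucker := rowDet_cons_snoc_plucker (hankelRow c (n + 2) 0) (hankelRow c' (n + 2) n)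
      (shiftCombKer a b) (hankelRow c' (n + 2) (n + 1)) (hankelRows c' n (n + 2))
    have deriv_c : hankelDetDeriv c (n + 2) = rowDet (Fin.cons (hankelRow c (n + 2) 0)
        (Fin.snoc (hankelRows c' n (n + 2)) (hankelRow c' (n + 2) (n + 1)))) := by
      rw [hankelDetDeriv_succ, hankelRows_succ_eq_cons, ← hankelRow_comp_succ,
        Fin.cons_snoc_eq_snoc_cons]
    rw [← deriv_c, rowDet_cons_shiftCombKer_snoc_hankelRows] at plucker
    simp only [← hankelRows_succ_eq_snoc, hc', ← hankelRows_succ_eq_cons,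
      rowDet_cons_shiftCombKer_hankelRows] at plucker
    rw [← hankelDet, ← hankelDet] at plucker
    linear_combination plucker

end Determinants

section DerivHankel
open Function Matrix
open scoped ContDiff

theorem hasDerivAt_rowDet {n : ℕ} {v : Fin n → ℝ → Fin n → ℝ} {v' : Fin n → Fin n → ℝ} {z : ℝ}
    (hv : ∀ i, HasDerivAt (v i) (v' i) z) :
    HasDerivAt (fun z ↦ rowDet fun i ↦ v i z)
      (∑ i, rowDet (update (fun i ↦ v i z) i (v' i))) z := by
  let det : ContinuousMultilinearMap ℝ (fun _ : Fin n ↦ Fin n → ℝ) ℝ :=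
    { detRowAlternating.toMultilinearMap with cont := Continuous.matrix_det continuous_id }
  have chain_rule := (HasFDerivAt.multilinear_comp det fun i ↦ (hv i).hasFDerivAt).hasDerivAt
  refine chain_rule.congr_deriv ?_
  simp only [_root_.sum_apply, ContinuousLinearMap.comp_apply,
    ContinuousLinearMap.toSpanSingleton_apply, one_smul]
  rfl

/-- The sequence of all derivatives of `f` at `z`. -/
def jet (f : ℝ → ℝ) (z : ℝ) : ℕ → ℝ := fun i ↦ iteratedDeriv i f z

/-- The Hankel determinant of order `n` of the derivatives of `f`, i.e. the Wronskian of
`f, f', …, f⁽ⁿ⁻¹⁾`; the generalised Laguerre polynomials are of this form. -/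
def derivHankel (f : ℝ → ℝ) (n : ℕ) : ℝ → ℝ := fun z ↦ hankelDet (jet f z) n

/-- The first order differential operator `a d/dz + b`. -/
def firstOrderOp (a b : ℝ) (f : ℝ → ℝ) : ℝ → ℝ := a • deriv f + b • f

variable {f : ℝ → ℝ}

theorem hasDerivAt_derivHankel (hf : ContDiff ℝ ∞ f) (n : ℕ) (z : ℝ) :
    HasDerivAt (derivHankel f n) (hankelDetDeriv (jet f z) n) z := by
  refine hasDerivAt_rowDet (v := fun i w ↦ hankelRow (jet f w) n i) fun i ↦
    hasDerivAt_pi.mpr fun j ↦ ?_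
  have smooth_iter := hf.differentiable_iteratedDeriv (i + j)
    (WithTop.coe_lt_coe.mpr (ENat.natCast_lt_top _))
  rw [hankelRow, jet, add_right_comm, iteratedDeriv_succ]
  exact (smooth_iter z).hasDerivAt

theorem hirota_derivHankel {g : ℝ → ℝ} (hf : ContDiff ℝ ∞ f) (hg : ContDiff ℝ ∞ g) (m n : ℕ)
    (z : ℝ) :
    hirota (derivHankel f m) (derivHankel g n) z =
      hankelDetDeriv (jet f z) m * hankelDet (jet g z) n -
        hankelDet (jet f z) m * hankelDetDeriv (jet g z) n := by
  rw [hirota, (hasDerivAt_derivHankel hf m z).deriv, (hasDerivAt_derivHankel hg n z).deriv]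
  rfl

theorem contDiff_firstOrderOp (hf : ContDiff ℝ ∞ f) (a b : ℝ) :
    ContDiff ℝ ∞ (firstOrderOp a b f) :=
  ((contDiff_infty_iff_deriv.mp hf).2.const_smul a).add (hf.const_smul b)

theorem jet_deriv (f : ℝ → ℝ) (z : ℝ) : jet (deriv f) z = fun i ↦ jet f z (i + 1) := by
  ext i
  rw [jet, jet, iteratedDeriv_succ']

theorem jet_neg (f : ℝ → ℝ) (z : ℝ) : jet (-f) z = -jet f z :=
  funext fun i ↦ iteratedDeriv_neg i f z

theorem jet_firstOrderOp (hf : ContDiff ℝ ∞ f) (a b z : ℝ) :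
    jet (firstOrderOp a b f) z = seqShiftComb a b (jet f z) := by
  ext i
  have smooth_deriv : ContDiffAt ℝ i (a • deriv f) z :=
    (((contDiff_infty_iff_deriv.mp hf).2.of_le (mod_cast le_top)).const_smul a).contDiffAt
  have smooth : ContDiffAt ℝ i (b • f) z :=
    ((hf.of_le (mod_cast le_top)).const_smul b).contDiffAt
  rw [jet, firstOrderOp, iteratedDeriv_add smooth_deriv smooth, iteratedDeriv_const_smul_field,
    iteratedDeriv_const_smul_field, ← iteratedDeriv_succ']
  rfl

theorem derivHankel_neg (f : ℝ → ℝ) (n : ℕ) (z : ℝ) :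
    derivHankel (-f) n z = (-1) ^ n * derivHankel f n z := by
  rw [derivHankel, jet_neg, hankelDet_neg, derivHankel]

theorem hirota_derivHankel_firstOrderOp (hf : ContDiff ℝ ∞ f) (a b a' b' : ℝ) (n : ℕ) (z : ℝ) :
    hirota (derivHankel (firstOrderOp a b f) (n + 1))
        (derivHankel (firstOrderOp a' b' f) (n + 1)) z =
      (a * b' - a' * b) * derivHankel (firstOrderOp a b (firstOrderOp a' b' f)) n z *
        derivHankel f (n + 2) z := by
  have smooth_op := contDiff_firstOrderOp hf
  simp only [hirota_derivHankel (smooth_op _ _) (smooth_op _ _), derivHankel,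
    jet_firstOrderOp (smooth_op _ _), jet_firstOrderOp hf, hankelDet_hirota_seqShiftComb]

theorem derivHankel_firstOrderOp_three_term (hf : ContDiff ℝ ∞ f) (a₁ b₁ a₂ b₂ a₃ b₃ : ℝ) (n : ℕ)
    (z : ℝ) :
    (a₂ * b₃ - a₃ * b₂) * derivHankel (firstOrderOp a₁ b₁ f) (n + 1) z *
          derivHankel (firstOrderOp a₂ b₂ (firstOrderOp a₃ b₃ f)) n z =
      (a₁ * b₃ - a₃ * b₁) * derivHankel (firstOrderOp a₂ b₂ f) (n + 1) z *
          derivHankel (firstOrderOp a₁ b₁ (firstOrderOp a₃ b₃ f)) n z -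
        (a₁ * b₂ - a₂ * b₁) * derivHankel (firstOrderOp a₃ b₃ f) (n + 1) z *
          derivHankel (firstOrderOp a₁ b₁ (firstOrderOp a₂ b₂ f)) n z := by
  simp only [derivHankel, jet_firstOrderOp (contDiff_firstOrderOp hf _ _), jet_firstOrderOp hf]
  exact hankelDet_seqShiftComb_three_term ..

theorem hirota_derivHankel_firstOrderOp_deriv (hf : ContDiff ℝ ∞ f) (a b : ℝ) (n : ℕ) (z : ℝ) :
    hirota (derivHankel (firstOrderOp a b (deriv f)) n) (derivHankel f (n + 1)) z =
      -(derivHankel (firstOrderOp a b f) n z * derivHankel (deriv f) (n + 1) z) := by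
  have smooth_deriv := (contDiff_infty_iff_deriv.mp hf).2
  rw [hirota_derivHankel (contDiff_firstOrderOp smooth_deriv a b) hf]
  simp only [derivHankel, jet_firstOrderOp smooth_deriv, jet_firstOrderOp hf, jet_deriv,
    hankelDet_hirota_seqShiftComb_shift]

theorem hirota_derivHankel_firstOrderOp_neg_deriv (hf : ContDiff ℝ ∞ f) (a b : ℝ) (n : ℕ) (z : ℝ) :
    hirota (derivHankel (firstOrderOp a b (-deriv f)) n) (derivHankel f (n + 1)) z =
      derivHankel (firstOrderOp a b f) n z * derivHankel (-deriv f) (n + 1) z := by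
  have op_neg : firstOrderOp a b (-deriv f) = firstOrderOp (-a) (-b) (deriv f) := by
    ext z
    simp [firstOrderOp]
  have neg_op : firstOrderOp (-a) (-b) f = -firstOrderOp a b f := by
    simp only [firstOrderOp, neg_smul, neg_add]
  rw [op_neg, hirota_derivHankel_firstOrderOp_deriv hf, neg_op, derivHankel_neg, derivHankel_neg]
  ring

end DerivHankel

section Laguerre
open scoped ContDiff

theorem genBinom_eq_choose (x : ℝ) (k : ℕ) : genBinom x k = Ring.choose x k := by
  have falling_factorial := Ring.descPochhammer_eq_factorial_smul_choose x k
  rw [← Polynomial.aeval_eq_smeval, Polynomial.aeval_def, ← Polynomial.eval_map,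
    descPochhammer_map, descPochhammer_eval_eq_prod_range, nsmul_eq_mul] at falling_factorial
  rw [genBinom, falling_factorial, mul_div_cancel_left₀ _ (by positivity)]

theorem genBinom_succ_succ (x : ℝ) (k : ℕ) :
    genBinom (x + 1) (k + 1) = genBinom x k + genBinom x (k + 1) := by
  simp only [genBinom_eq_choose, Ring.choose_succ_succ]

theorem lagL_of_neg {N : ℤ} (hN : N < 0) (α : ℝ) : lagL N α = 0 := by
  ext z
  simp [lagL, hN]

theorem lagL_natCast (n : ℕ) (α : ℝ) :
    lagL n α = fun z ↦ ∑ k ∈ range (n + 1),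
      (-1) ^ k * genBinom (n + α) (n - k) * z ^ k / k.factorial := by
  ext z
  simp [lagL]

theorem contDiff_lagL (N : ℤ) (α : ℝ) : ContDiff ℝ ∞ (lagL N α) := by
  rcases lt_or_ge N 0 with hN | hN
  · rw [lagL_of_neg hN]
    exact contDiff_const
  · lift N to ℕ using hN
    rw [lagL_natCast]
    fun_prop

theorem hasDerivAt_lagL_succ (n : ℕ) (α z : ℝ) :
    HasDerivAt (lagL (n + 1 : ℕ) α) (-lagL n (α + 1) z) z := by
  rw [lagL_natCast, lagL_natCast, ← sum_neg_distrib]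
  have termwise := HasDerivAt.fun_sum (u := range (n + 2)) fun k _ ↦
    ((hasDerivAt_pow k z).const_mul
      ((-1) ^ k * genBinom ((n + 1 : ℕ) + α) (n + 1 - k))).div_const (k.factorial : ℝ)
  refine termwise.congr_deriv ?_
  rw [sum_range_succ']
  simp only [CharP.cast_eq_zero, zero_mul, mul_zero, zero_div, add_zero]
  refine sum_congr rfl fun k _ ↦ ?_
  have same_binom :
      genBinom ((n + 1 : ℕ) + α) (n + 1 - (k + 1)) = genBinom (n + (α + 1)) (n - k) := by
    congr 1
    · push_cast; ring
    · omega
  rw [same_binom, Nat.factorial_succ]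
  push_cast
  field_simp
  ring

theorem deriv_lagL (N : ℤ) (α : ℝ) : deriv (lagL N α) = -lagL (N - 1) (α + 1) := by
  rcases lt_or_ge N 0 with hN | hN
  · rw [lagL_of_neg hN, lagL_of_neg (by lia)]
    simp
  · lift N to ℕ using hN
    rcases N with _ | n
    · rw [lagL_of_neg (N := _ - 1) (by simp), lagL_natCast]
      ext z
      simp
    · rw [Nat.cast_succ, add_sub_cancel_right]
      ext z
      exact (hasDerivAt_lagL_succ n α z).deriv

theorem lagL_add_one (N : ℤ) (α : ℝ) : lagL N (α + 1) = lagL N α + lagL (N - 1) (α + 1) := by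
  rcases lt_or_ge N 0 with hN | hN
  · rw [lagL_of_neg hN, lagL_of_neg hN, lagL_of_neg (by lia), add_zero]
  · lift N to ℕ using hN
    rcases N with _ | n
    · rw [lagL_of_neg (N := _ - 1) (by simp), add_zero, lagL_natCast, lagL_natCast]
      simp [genBinom]
    · rw [Nat.cast_succ, add_sub_cancel_right, ← Nat.cast_succ]
      ext z
      simp only [lagL_natCast, Pi.add_apply]
      rw [sum_range_succ, sum_range_succ _ (n + 1), add_right_comm, ← sum_add_distrib]
      congr 1
      · refine sum_congr rfl fun k hk ↦ ?_
        have pascal := genBinom_succ_succ ((n + 1 : ℕ) + α) (n - k)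
        rw [← Nat.sub_add_comm (mem_range_succ_iff.mp hk), add_assoc] at pascal
        rw [pascal, show (n : ℝ) + (α + 1) = (n + 1 : ℕ) + α by push_cast; ring]
        ring
      · simp [genBinom]

theorem firstOrderOp_neg_one_zero_lagL (N : ℤ) (α : ℝ) :
    firstOrderOp (-1) 0 (lagL N α) = lagL (N - 1) (α + 1) := by
  simp [firstOrderOp, deriv_lagL]

theorem firstOrderOp_neg_one_one_lagL (N : ℤ) (α : ℝ) :
    firstOrderOp (-1) 1 (lagL N α) = lagL N (α + 1) := by
  rw [lagL_add_one N α]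
  simp [firstOrderOp, deriv_lagL, add_comm]

theorem firstOrderOp_zero_one (f : ℝ → ℝ) : firstOrderOp 0 1 f = f := by
  simp [firstOrderOp]

theorem genLag_eq_derivHankel {m N : ℤ} {n : ℕ} {μ α : ℝ} (hN : m + n = N) (hα : μ + 1 = α) :
    genLag m n μ = derivHankel (lagL N α) n := by
  rw [← hN, ← hα]
  rfl

variable (N : ℤ) (α : ℝ) (n : ℕ) (z : ℝ)

theorem hirota_derivHankel_lagL_sub_one_add_one :
    hirota (derivHankel (lagL N α) (n + 1)) (derivHankel (lagL (N - 1) (α + 1)) (n + 1)) z =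
      derivHankel (lagL (N - 1) (α + 1)) n z * derivHankel (lagL N α) (n + 2) z := by
  simpa [firstOrderOp_zero_one, firstOrderOp_neg_one_zero_lagL] using
    hirota_derivHankel_firstOrderOp (contDiff_lagL N α) 0 1 (-1) 0 n z

theorem hirota_derivHankel_lagL_add_one :
    hirota (derivHankel (lagL N α) (n + 1)) (derivHankel (lagL N (α + 1)) (n + 1)) z =
      derivHankel (lagL N (α + 1)) n z * derivHankel (lagL N α) (n + 2) z := by
  simpa [firstOrderOp_zero_one, firstOrderOp_neg_one_one_lagL] using
    hirota_derivHankel_firstOrderOp (contDiff_lagL N α) 0 1 (-1) 1 n z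

theorem hirota_derivHankel_lagL_add_one_sub_one_add_one :
    hirota (derivHankel (lagL N (α + 1)) (n + 1)) (derivHankel (lagL (N - 1) (α + 1)) (n + 1)) z =
      derivHankel (lagL (N - 1) (α + 2)) n z * derivHankel (lagL N α) (n + 2) z := by
  simpa [firstOrderOp_neg_one_one_lagL, firstOrderOp_neg_one_zero_lagL, add_assoc,
    one_add_one_eq_two] using
    hirota_derivHankel_firstOrderOp (contDiff_lagL N α) (-1) 1 (-1) 0 n z

theorem hirota_derivHankel_firstOrderOp_lagL (a b : ℝ) :
    hirota (derivHankel (firstOrderOp a b (lagL (N - 1) (α + 1))) n)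
        (derivHankel (lagL N α) (n + 1)) z =
      derivHankel (firstOrderOp a b (lagL N α)) n z *
        derivHankel (lagL (N - 1) (α + 1)) (n + 1) z := by
  simpa [deriv_lagL] using
    hirota_derivHankel_firstOrderOp_neg_deriv (contDiff_lagL N α) a b n z

theorem hirota_derivHankel_lagL_sub_one_add_one_succ :
    hirota (derivHankel (lagL (N - 1) (α + 1)) n) (derivHankel (lagL N α) (n + 1)) z =
      derivHankel (lagL N α) n z * derivHankel (lagL (N - 1) (α + 1)) (n + 1) z := by
  simpa only [firstOrderOp_zero_one] using hirota_derivHankel_firstOrderOp_lagL N α n z 0 1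

theorem hirota_derivHankel_lagL_sub_two_add_two_succ :
    hirota (derivHankel (lagL (N - 2) (α + 2)) n) (derivHankel (lagL N α) (n + 1)) z =
      derivHankel (lagL (N - 1) (α + 1)) n z * derivHankel (lagL (N - 1) (α + 1)) (n + 1) z := by
  simpa only [firstOrderOp_neg_one_zero_lagL, sub_sub, add_assoc, one_add_one_eq_two] using
    hirota_derivHankel_firstOrderOp_lagL N α n z (-1) 0

theorem hirota_derivHankel_lagL_sub_one_add_two_succ :
    hirota (derivHankel (lagL (N - 1) (α + 2)) n) (derivHankel (lagL N α) (n + 1)) z =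
      derivHankel (lagL N (α + 1)) n z * derivHankel (lagL (N - 1) (α + 1)) (n + 1) z := by
  simpa only [firstOrderOp_neg_one_one_lagL, add_assoc, one_add_one_eq_two] using
    hirota_derivHankel_firstOrderOp_lagL N α n z (-1) 1

theorem derivHankel_lagL_three_term :
    derivHankel (lagL N (α + 1)) (n + 1) z * derivHankel (lagL (N - 1) (α + 1)) n z -
        derivHankel (lagL (N - 1) (α + 1)) (n + 1) z * derivHankel (lagL N (α + 1)) n z =
      derivHankel (lagL N α) (n + 1) z * derivHankel (lagL (N - 1) (α + 2)) n z := by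
  have three_term := derivHankel_firstOrderOp_three_term (contDiff_lagL N α) (-1) 1 (-1) 0 0 1 n z
  simp only [firstOrderOp_zero_one, firstOrderOp_neg_one_one_lagL, firstOrderOp_neg_one_zero_lagL,
    add_assoc, one_add_one_eq_two] at three_term
  linear_combination -three_term

end Laguerre

theorem genLag_hirota_equations_general (m : ℤ) (n : ℕ) (μ z : ℝ) :
    hirota (genLag m n (μ + 1)) (genLag m (n + 1) μ) z =
        genLag (m + 1) n μ z * genLag (m - 1) (n + 1) (μ + 1) z ∧
      hirota (genLag m n (μ + 1)) (genLag (m + 1) (n + 1) (μ - 1)) z =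
        genLag (m + 1) n μ z * genLag m (n + 1) μ z ∧
      hirota (genLag m n (μ + 1)) (genLag m (n + 1) (μ - 1)) z =
        genLag (m + 1) n μ z * genLag (m - 1) (n + 1) μ z ∧
      hirota (genLag (m + 1) (n + 1) μ) (genLag m (n + 1) (μ + 1)) z =
        genLag (m + 1) n (μ + 1) z * genLag m (n + 2) μ z ∧
      hirota (genLag m (n + 1) μ) (genLag m (n + 1) (μ + 1)) z =
        genLag (m + 1) n (μ + 1) z * genLag (m - 1) (n + 2) μ z ∧
      hirota (genLag (m + 1) (n + 1) μ) (genLag m (n + 1) μ) z =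
        genLag (m + 1) n (μ + 1) z * genLag m (n + 2) (μ - 1) z ∧
      genLag m (n + 1) μ z * genLag m n μ z - genLag (m - 1) (n + 1) μ z * genLag (m + 1) n μ z =
        genLag m (n + 1) (μ - 1) z * genLag m n (μ + 1) z := by
  refine ⟨?_, ?_, ?_, ?_, ?_, ?_, ?_⟩
  · convert hirota_derivHankel_lagL_sub_one_add_one_succ (m + n + 1) (μ + 1) n z using 2 <;>
      rw [genLag_eq_derivHankel] <;> push_cast <;> ring
  · convert hirota_derivHankel_lagL_sub_two_add_two_succ (m + n + 2) μ n z using 2 <;>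
      rw [genLag_eq_derivHankel] <;> push_cast <;> ring
  · convert hirota_derivHankel_lagL_sub_one_add_two_succ (m + n + 1) μ n z using 2 <;>
      rw [genLag_eq_derivHankel] <;> push_cast <;> ring
  · convert hirota_derivHankel_lagL_sub_one_add_one (m + n + 2) (μ + 1) n z using 2 <;>
      rw [genLag_eq_derivHankel] <;> push_cast <;> ring
  · convert hirota_derivHankel_lagL_add_one (m + n + 1) (μ + 1) n z using 2 <;>
      rw [genLag_eq_derivHankel] <;> push_cast <;> ring
  · convert hirota_derivHankel_lagL_add_one_sub_one_add_one (m + n + 2) μ n z using 2 <;>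
      rw [genLag_eq_derivHankel] <;> push_cast <;> ring
  · convert derivHankel_lagL_three_term (m + n + 1) μ n z using 3 <;>
      rw [genLag_eq_derivHankel] <;> push_cast <;> ring

/-- Hirota bilinear equations and a discrete bilinear equation. -/
theorem genLag_hirota_equations (m n : ℕ) (hm : 1 ≤ m) (hn : 1 ≤ n) (μ : ℝ) (z : ℝ) :
    hirota (genLag (m : ℤ) (n - 1) (μ + 1)) (genLag (m : ℤ) n μ) z
        = genLag ((m : ℤ) + 1) (n - 1) μ z * genLag ((m : ℤ) - 1) n (μ + 1) z
      ∧ hirota (genLag (m : ℤ) (n - 1) (μ + 1)) (genLag ((m : ℤ) + 1) n (μ - 1)) z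
        = genLag ((m : ℤ) + 1) (n - 1) μ z * genLag (m : ℤ) n μ z
      ∧ hirota (genLag (m : ℤ) (n - 1) (μ + 1)) (genLag (m : ℤ) n (μ - 1)) z
        = genLag ((m : ℤ) + 1) (n - 1) μ z * genLag ((m : ℤ) - 1) n μ z
      ∧ hirota (genLag ((m : ℤ) + 1) n μ) (genLag (m : ℤ) n (μ + 1)) z
        = genLag ((m : ℤ) + 1) (n - 1) (μ + 1) z * genLag (m : ℤ) (n + 1) μ z
      ∧ hirota (genLag (m : ℤ) n μ) (genLag (m : ℤ) n (μ + 1)) z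
        = genLag ((m : ℤ) + 1) (n - 1) (μ + 1) z * genLag ((m : ℤ) - 1) (n + 1) μ z
      ∧ hirota (genLag ((m : ℤ) + 1) n μ) (genLag (m : ℤ) n μ) z
        = genLag ((m : ℤ) + 1) (n - 1) (μ + 1) z * genLag (m : ℤ) (n + 1) (μ - 1) z
      ∧ genLag (m : ℤ) n μ z * genLag (m : ℤ) (n - 1) μ z
          - genLag ((m : ℤ) - 1) n μ z * genLag ((m : ℤ) + 1) (n - 1) μ z
        = genLag (m : ℤ) n (μ - 1) z * genLag (m : ℤ) (n - 1) (μ + 1) z := by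
  obtain ⟨k, rfl⟩ := Nat.exists_eq_add_of_le' hn
  exact genLag_hirota_equations_general m k μ z
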